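/- arXiv:2012.03056 — 3 statements merged into one kernel-verified Lean document; each statement's English description precedes it below -/
import Mathlib

section
/- Let I be a nonzero ideal of the order R = 𝒪_f in a quadratic number field, and let f' | f be such that the multiplier ring ϱ(I) = {x ∈ K : xI ⊆ I} equals 𝒪_{f'}. Then Fitt₁(I) = I·I⁻¹ = ℤ(f/f') + ℤfω = (R : ϱ(I)), and R/Fitt₁(I) is isomorphic as a ring to ℤ/(f/f')ℤ. -/
/-- The second Fitting ideal of a two-generated ideal, computed from the generating pair
`(a, b)`: the ideal generated by all coefficients involved in a relation
`r * a + s * b = 0`. -/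
def relFittingIdeal {R : Type*} [CommRing R] (a b : R) : Ideal R :=
  Ideal.span {r : R | (∃ s, r * a + s * b = 0) ∨ (∃ s, s * a + r * b = 0)}

theorem ofi_bezout (A B C : ℤ) (h : A ≠ 0 ∨ B ≠ 0) : ∃ n p q r A' B' C' : ℤ,
    n ≠ 0 ∧ A = n * A' ∧ B = n * B' ∧ C = n * C' ∧ n = p * A + q * B + r * C := by
  have h1 : ((Int.gcd A B : ℕ) : ℤ) ∣ A := Int.gcd_dvd_left ..
  have h2 : ((Int.gcd A B : ℕ) : ℤ) ∣ B := Int.gcd_dvd_right ..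
  have h3 : ((Int.gcd (Int.gcd A B) C : ℕ) : ℤ) ∣ Int.gcd A B := Int.gcd_dvd_left ..
  have h4 : ((Int.gcd (Int.gcd A B) C : ℕ) : ℤ) ∣ C := Int.gcd_dvd_right ..
  have e1 := Int.gcd_eq_gcd_ab A B
  have e2 := Int.gcd_eq_gcd_ab (Int.gcd A B) C
  obtain ⟨A', hA⟩ := h3.trans h1
  obtain ⟨B', hB⟩ := h3.trans h2
  obtain ⟨C', hC⟩ := h4
  refine ⟨_, Int.gcdA A B * Int.gcdA (Int.gcd A B) C, Int.gcdB A B * Int.gcdA (Int.gcd A B) C,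
    Int.gcdB (Int.gcd A B) C, A', B', C', ?_, hA, hB, hC, ?_⟩
  · intro h0
    rw [h0] at hA hB
    simp at hA hB
    tauto
  · linear_combination e2 + Int.gcdA (Int.gcd A B) C * e1

theorem ofi_indep {K : Type*} [Field K] [Algebra ℚ K] (m : ℤ) (sqm : K)
    (hbasis : ∀ x : K, ∃! c : ℚ × ℚ,
      x = algebraMap ℚ K c.1 + algebraMap ℚ K c.2 * sqm)
    (ω : K) (hω : ω = if m % 4 = 1 then (1 + sqm) / 2 else sqm) (u v : ℤ)
    (h : (u : K) + v * ω = 0) : u = 0 ∧ v = 0 := by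
  have : CharZero K := algebraRat.charZero K
  have key : ∀ c d : ℚ, (c : K) + d * sqm = 0 → c = 0 ∧ d = 0 := by
    intro c d hcd
    have := (hbasis 0).unique (y₁ := (c, d)) (y₂ := (0, 0)) (by simp [hcd]) (by simp)
    simpa using this
  split_ifs at hω with h4
  · have := key (u + v / 2) (v / 2) (by
      push_cast
      rw [hω] at h
      linear_combination h)
    obtain ⟨h1, h2⟩ := this
    have hv : (v : ℚ) = 0 := by linarith
    have hu : (u : ℚ) = 0 := by linarith
    exact ⟨by exact_mod_cast hu, by exact_mod_cast hv⟩
  · have := key u v (by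
      push_cast
      rw [hω] at h
      exact h)
    exact ⟨by exact_mod_cast this.1, by exact_mod_cast this.2⟩

theorem ofi_quad {K : Type*} [Field K] [CharZero K] (m : ℤ) (sqm : K)
    (hsqm : sqm ^ 2 = (m : K))
    (ω : K) (hω : ω = if m % 4 = 1 then (1 + sqm) / 2 else sqm) :
    ∃ t k : ℤ, ω ^ 2 = t * ω + k := by
  split_ifs at hω with h4
  · obtain ⟨k, hk⟩ : ∃ k, m = 4 * k + 1 := ⟨m / 4, by omega⟩
    refine ⟨1, k, ?_⟩
    rw [hk] at hsqm
    push_cast at hsqm ⊢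
    rw [hω]
    linear_combination hsqm / 4
  · exact ⟨0, m, by rw [hω, hsqm]; simp⟩

/-- `Fitt₁(I) = I·I⁻¹`. -/
theorem ofi_fitt_eq {K : Type*} [Field K] (O : Subring K) (I : Ideal O) (hI : I ≠ ⊥)
    (a b : O) (hab : I = Ideal.span {a, b}) :
    relFittingIdeal a b =
      Ideal.span {w : O | ∃ x : K, (∀ y : O, y ∈ I → x * (y : K) ∈ O) ∧
        ∃ y : O, y ∈ I ∧ (w : K) = x * (y : K)} := by
  have hne : (a : K) ≠ 0 ∨ (b : K) ≠ 0 := by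
    by_contra! h
    apply hI
    rw [hab, Ideal.span_eq_bot]
    rintro x (rfl | rfl)
    · exact Subtype.ext h.1
    · exact Subtype.ext h.2
  have haI : a ∈ I := by rw [hab]; exact Ideal.subset_span (by simp)
  have hbI : b ∈ I := by rw [hab]; exact Ideal.subset_span (by simp)
  have key : ∀ r s : O, r * a + s * b = 0 → ∃ x : K, (∀ y : O, y ∈ I → x * (y : K) ∈ O) ∧
      (r : K) = x * b ∧ ((-s : O) : K) = x * a := by
    intro r s h
    have h' : (r : K) * a + s * b = 0 := by exact_mod_cast congrArg (Subtype.val) h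
    have : ∃ x : K, (r : K) = x * b ∧ ((-s : O) : K) = x * a := by
      by_cases hb : (b : K) = 0
      · have ha : (a : K) ≠ 0 := by tauto
        refine ⟨-s / a, ?_, ?_⟩
        · rw [hb] at h' ⊢
          simpa [ha] using h'
        · push_cast
          field_simp
      · refine ⟨r / b, ?_, ?_⟩
        · field_simp
        · push_cast
          field_simp
          linear_combination -h'
    obtain ⟨x, h1, h2⟩ := this
    refine ⟨x, ?_, h1, h2⟩
    intro y hy
    rw [hab, Ideal.mem_span_pair] at hy
    obtain ⟨p, q, rfl⟩ := hy
    have : x * ((p * a + q * b : O) : K) = ((p * (-s) + q * r : O) : K) := by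
      push_cast at h2 ⊢
      linear_combination -q * h1 - p * h2
    rw [this]
    exact Subtype.property _
  apply le_antisymm
  · rw [relFittingIdeal, Ideal.span_le]
    rintro r (⟨s, h⟩ | ⟨s, h⟩)
    · obtain ⟨x, hx, h1, h2⟩ := key r s h
      exact Ideal.subset_span ⟨x, hx, b, hbI, h1⟩
    · obtain ⟨x, hx, h1, h2⟩ := key s r h
      rw [SetLike.mem_coe, ← Ideal.neg_mem_iff]
      exact Ideal.subset_span ⟨x, hx, a, haI, h2⟩
  · rw [Ideal.span_le]
    rintro w ⟨x, hx, y, hy, hw⟩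
    rw [hab, Ideal.mem_span_pair] at hy
    obtain ⟨p, q, rfl⟩ := hy
    have e : w = p * ⟨x * a, hx a haI⟩ + q * ⟨x * b, hx b hbI⟩ := by
      apply Subtype.ext
      rw [hw]
      push_cast
      ring
    rw [e]
    apply Ideal.add_mem <;> apply Ideal.mul_mem_left <;> apply Ideal.subset_span
    · right
      refine ⟨-⟨x * b, hx b hbI⟩, Subtype.ext ?_⟩
      push_cast
      ring
    · left
      refine ⟨-⟨x * a, hx a haI⟩, Subtype.ext ?_⟩
      push_cast
      ring

/-- The invertibility of `I` over its multiplier ring. -/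
theorem ofi_invertible {K : Type*} [Field K] [CharZero K] (O : Subring K) (I : Ideal O)
    (hI : I ≠ ⊥) (a b : O) (hab : I = Ideal.span {a, b})
    (a' b' : O) (ha' : a ≠ 0 → a' ≠ 0) (hb' : b ≠ 0 → b' ≠ 0) (A B C : ℤ)
    (hA : (a : K) * a' = A) (hB : (b : K) * b' = B) (hC : (a : K) * b' + b * a' = C)
    (z : O)
    (hz : ∀ x : K, (∀ y : O, y ∈ I → ∃ z : O, z ∈ I ∧ x * (y : K) = (z : K)) →
      (z : K) * x ∈ O) :
    z ∈ Ideal.span {w : O | ∃ x : K, (∀ y : O, y ∈ I → x * (y : K) ∈ O) ∧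
        ∃ y : O, y ∈ I ∧ (w : K) = x * (y : K)} := by
  have haI : a ∈ I := by rw [hab]; exact Ideal.subset_span (by simp)
  have hbI : b ∈ I := by rw [hab]; exact Ideal.subset_span (by simp)
  have hne : A ≠ 0 ∨ B ≠ 0 := by
    by_contra! h
    apply hI
    rw [h.1] at hA
    rw [h.2] at hB
    have h1 : a * a' = 0 := Subtype.ext (by simpa using hA)
    have h2 : b * b' = 0 := Subtype.ext (by simpa using hB)
    have ha0 : a = 0 := by
      rcases mul_eq_zero.1 h1 with h | h <;> tauto
    have hb0 : b = 0 := by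
      rcases mul_eq_zero.1 h2 with h | h <;> tauto
    rw [hab, ha0, hb0]
    simp
  obtain ⟨n, p, q, r, A', B', C', hn, eA, eB, eC, e⟩ := ofi_bezout A B C hne
  have hnK : (n : K) ≠ 0 := by exact_mod_cast hn
  rw [eA] at hA
  rw [eB] at hB
  rw [eC] at hC
  push_cast at hA hB hC
  have hzint : ∀ j : ℤ, (z : K) * j ∈ O := fun j => O.mul_mem z.2 (intCast_mem O j)
  -- multipliers
  have M1 : (z : K) * (a * b' / n) ∈ O := by
    apply hz
    intro y hy
    rw [hab, Ideal.mem_span_pair] at hy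
    obtain ⟨s, t, rfl⟩ := hy
    refine ⟨s * (C' * a - A' * b) + t * (B' * a), ?_, ?_⟩
    · exact I.add_mem (I.mul_mem_left _ (I.sub_mem (I.mul_mem_left _ haI) (I.mul_mem_left _ hbI)))
        (I.mul_mem_left _ (I.mul_mem_left _ haI))
    · push_cast
      field_simp
      linear_combination s * a * hC - s * b * hA + t * a * hB
  have M2 : (z : K) * (b * a' / n) ∈ O := by
    have : (z : K) * (b * a' / n) = z * (C' : ℤ) - (z : K) * (a * b' / n) := by
      field_simp
      linear_combination z * hC
    rw [this]
    exact O.sub_mem (hzint _) M1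
  have M3 : (z : K) * (a * a' / n) ∈ O := by
    have : (z : K) * (a * a' / n) = z * (A' : ℤ) := by
      field_simp
      linear_combination z * hA
    rw [this]
    exact hzint _
  have M4 : (z : K) * (b * b' / n) ∈ O := by
    have : (z : K) * (b * b' / n) = z * (B' : ℤ) := by
      field_simp
      linear_combination z * hB
    rw [this]
    exact hzint _
  have L1 : ∀ y : O, y ∈ I → (z * a' / n : K) * (y : K) ∈ O := by
    intro y hy
    rw [hab, Ideal.mem_span_pair] at hy
    obtain ⟨s, t, rfl⟩ := hy
    have : (z * a' / n : K) * ((s * a + t * b : O) : K)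
        = s * ((z : K) * (a * a' / n)) + t * ((z : K) * (b * a' / n)) := by
      push_cast
      ring
    rw [this]
    exact O.add_mem (O.mul_mem s.2 M3) (O.mul_mem t.2 M2)
  have L2 : ∀ y : O, y ∈ I → (z * b' / n : K) * (y : K) ∈ O := by
    intro y hy
    rw [hab, Ideal.mem_span_pair] at hy
    obtain ⟨s, t, rfl⟩ := hy
    have : (z * b' / n : K) * ((s * a + t * b : O) : K)
        = s * ((z : K) * (a * b' / n)) + t * ((z : K) * (b * b' / n)) := by
      push_cast
      ring
    rw [this]
    exact O.add_mem (O.mul_mem s.2 M1) (O.mul_mem t.2 M4)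
  have ez : z = p * ⟨_, L1 a haI⟩ + q * ⟨_, L2 b hbI⟩ + r * (⟨_, L2 a haI⟩ + ⟨_, L1 b hbI⟩) := by
    apply Subtype.ext
    push_cast
    rw [eA, eB, eC] at e
    have e' : (n : K) = p * (n * A') + q * (n * B') + r * (n * C') := by exact_mod_cast e
    field_simp
    linear_combination z * e' - p * z * hA - q * z * hB - r * z * hC
  rw [ez]
  refine Ideal.add_mem _ (Ideal.add_mem _ ?_ ?_) ?_
  · exact Ideal.mul_mem_left _ _ (Ideal.subset_span ⟨_, L1, a, haI, rfl⟩)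
  · exact Ideal.mul_mem_left _ _ (Ideal.subset_span ⟨_, L2, b, hbI, rfl⟩)
  · exact Ideal.mul_mem_left _ _ (Ideal.add_mem _ (Ideal.subset_span ⟨_, L2, a, haI, rfl⟩)
      (Ideal.subset_span ⟨_, L1, b, hbI, rfl⟩))

set_option synthInstance.maxHeartbeats 1000000 in
set_option maxHeartbeats 1000000 in
/-- Let `O = 𝒪_f = ℤ + ℤfω` be the order of conductor `f` in the
quadratic field `K = ℚ(√m)`, `I` a nonzero ideal of `O` with generating pair `(a, b)`,
and `f' ∣ f` such that the multiplier ring `ϱ(I)` equals `𝒪_{f'} = ℤ + ℤf'ω`.  Then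
`Fitt₁(I) = I·I⁻¹ = ℤ(f/f') + ℤfω = (O : 𝒪_{f'})`, and `O/Fitt₁(I) ≃ ℤ/(f/f')ℤ`
as rings. -/
theorem order_fitting_ideal (m : ℤ) (hm : Squarefree m) (hm1 : m ≠ 1)
    (K : Type*) [Field K] [Algebra ℚ K] (sqm : K) (hsqm : sqm ^ 2 = (m : K))
    (hbasis : ∀ x : K, ∃! c : ℚ × ℚ,
      x = algebraMap ℚ K c.1 + algebraMap ℚ K c.2 * sqm)
    (ω : K) (hω : ω = if m % 4 = 1 then (1 + sqm) / 2 else sqm)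
    (f : ℕ) (hf : 0 < f)
    (O : Subring K) (hO : ∀ x : K, x ∈ O ↔ ∃ a b : ℤ, x = a + b * ((f : K) * ω))
    (I : Ideal O) (hI : I ≠ ⊥)
    (a b : O) (hab : I = Ideal.span {a, b})
    (f' : ℕ) (hf'0 : 0 < f') (hf' : f' ∣ f)
    (hmult : ∀ x : K,
      (∀ y : O, y ∈ I → ∃ z : O, z ∈ I ∧ x * (y : K) = (z : K)) ↔
        ∃ u v : ℤ, x = u + v * ((f' : K) * ω)) :
    relFittingIdeal a b =
      Ideal.span {w : O | ∃ x : K, (∀ y : O, y ∈ I → x * (y : K) ∈ O) ∧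
        ∃ y : O, y ∈ I ∧ (w : K) = x * (y : K)} ∧
    (∀ z : O, z ∈ relFittingIdeal a b ↔
      ∃ u v : ℤ, (z : K) = u * ((f / f' : ℕ) : K) + v * ((f : K) * ω)) ∧
    (∀ z : O, z ∈ relFittingIdeal a b ↔
      ∀ x : K, (∃ u v : ℤ, x = u + v * ((f' : K) * ω)) → (z : K) * x ∈ O) ∧
    Nonempty ((O ⧸ relFittingIdeal a b) ≃+* ZMod (f / f')) := by
  have : CharZero K := algebraRat.charZero K
  have hind := ofi_indep m sqm hbasis ω hω
  obtain ⟨t, k, hq⟩ := ofi_quad m sqm hsqm ω hω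
  obtain ⟨g, rfl⟩ := hf'
  have hg : f' * g / f' = g := Nat.mul_div_cancel_left g hf'0
  rw [hg]
  have hfitt := ofi_fitt_eq O I hI a b hab
  -- conjugates
  have hconj : ∀ u v u' v' : ℤ, ∃ N : ℤ,
      (u + v * (((f' * g : ℕ) : K) * ω)) * ((u' + v' * (f' * g : ℕ) * t : ℤ) - v' * (((f' * g : ℕ) : K) * ω))
      + (u' + v' * (((f' * g : ℕ) : K) * ω)) * ((u + v * (f' * g : ℕ) * t : ℤ) - v * (((f' * g : ℕ) : K) * ω))
      = (N : K) := by
    intro u v u' v'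
    refine ⟨2 * u * u' + (u * v' + v * u') * (f' * g) * t - 2 * v * v' * (f' * g) ^ 2 * k, ?_⟩
    push_cast
    linear_combination (-2 * v * v' * (f' * g) ^ 2 : K) * hq
  have hnorm : ∀ u v : ℤ, ∃ N : ℤ,
      (u + v * (((f' * g : ℕ) : K) * ω)) * ((u + v * (f' * g : ℕ) * t : ℤ) - v * (((f' * g : ℕ) : K) * ω))
      = (N : K) := by
    intro u v
    refine ⟨u * u + (u * v) * (f' * g) * t - v * v * (f' * g) ^ 2 * k, ?_⟩
    push_cast
    linear_combination (-v * v * (f' * g) ^ 2 : K) * hq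
  have hcmem : ∀ u v : ℤ,
      ((u + v * (f' * g : ℕ) * t : ℤ) - v * (((f' * g : ℕ) : K) * ω)) ∈ O := by
    intro u v
    rw [hO]
    exact ⟨u + v * (f' * g : ℕ) * t, -v, by push_cast; ring⟩
  have hc0 : ∀ u v : ℤ,
      ((u + v * (f' * g : ℕ) * t : ℤ) - v * (((f' * g : ℕ) : K) * ω)) = 0 →
      (u + v * (((f' * g : ℕ) : K) * ω)) = 0 := by
    intro u v h
    obtain ⟨h1, h2⟩ := hind (u + v * (f' * g : ℕ) * t) (-(v * (f' * g : ℕ))) (by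
      push_cast at h ⊢
      linear_combination h)
    have h3 : v = 0 := by
      rcases mul_eq_zero.1 (neg_eq_zero.1 h2) with h | h
      · exact h
      · omega
    subst h3
    have : u = 0 := by simpa using h1
    subst this
    simp
  -- Fitting ideal = conductor
  have hB : ∀ z : O, z ∈ relFittingIdeal a b ↔
      ∀ x : K, (∃ u v : ℤ, x = u + v * ((f' : K) * ω)) → (z : K) * x ∈ O := by
    intro z
    constructor
    · intro hz x hx
      rw [hfitt] at hz
      have hx' := (hmult x).2 hx
      induction hz using Submodule.span_induction with
      | mem w hw =>
        obtain ⟨c, hc, y, hy, hw⟩ := hw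
        obtain ⟨y', hy', e⟩ := hx' y hy
        have : (w : K) * x = c * y' := by
          rw [hw, ← e]
          ring
        rw [this]
        exact hc y' hy'
      | zero => simp
      | add p q _ _ hp hq =>
        push_cast
        rw [add_mul]
        exact O.add_mem hp hq
      | smul r p _ hp =>
        have : ((r • p : O) : K) * x = r * (p * x) := by
          rw [smul_eq_mul]
          push_cast
          ring
        rw [this]
        exact O.mul_mem r.2 hp
    · intro hz
      rw [hfitt]
      obtain ⟨u, v, ea⟩ := (hO a).1 a.2
      obtain ⟨u', v', eb⟩ := (hO b).1 b.2
      obtain ⟨A, hA⟩ := hnorm u v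
      obtain ⟨B, hB⟩ := hnorm u' v'
      obtain ⟨C, hC⟩ := hconj u v u' v'
      refine ofi_invertible O I hI a b hab ⟨_, hcmem u v⟩ ⟨_, hcmem u' v'⟩ ?_ ?_ A B C ?_ ?_ ?_ z ?_
      · intro h0 h
        exact h0 (Subtype.ext (ea.trans (hc0 u v (congrArg Subtype.val h))))
      · intro h0 h
        exact h0 (Subtype.ext (eb.trans (hc0 u' v' (congrArg Subtype.val h))))
      · rw [ea]
        exact hA
      · rw [eb]
        exact hB
      · rw [ea, eb]
        exact hC
      · intro x hx
        exact hz x ((hmult x).1 hx)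
  -- conductor = explicit lattice
  have hf'K : (f' : K) ≠ 0 := by exact_mod_cast hf'0.ne'
  have hAA : ∀ z : O, z ∈ relFittingIdeal a b ↔
      ∃ u v : ℤ, (z : K) = u * (g : K) + v * (((f' * g : ℕ) : K) * ω) := by
    intro z
    rw [hB]
    constructor
    · intro h
      obtain ⟨u, v, ez⟩ := (hO z).1 z.2
      obtain ⟨c, d, e⟩ := (hO _).1 (h (f' * ω) ⟨0, 1, by simp⟩)
      rw [ez] at e
      obtain ⟨-, h2⟩ := hind (v * f' * g * f' * k - c) (u * f' + v * f' * g * f' * t - d * f' * g) (by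
        push_cast at e ⊢
        linear_combination e - (v * f' * g * f' : K) * hq)
      have h3 : (f' : ℤ) * (u - g * (d - v * f' * t)) = 0 := by linear_combination h2
      have h4 : u = g * (d - v * f' * t) := by
        rcases mul_eq_zero.1 h3 with h | h
        · omega
        · linarith
      refine ⟨d - v * f' * t, v, ?_⟩
      rw [ez, h4]
      push_cast
      ring
    · rintro ⟨u, v, ez⟩ x ⟨c, d, rfl⟩
      rw [hO, ez]
      refine ⟨u * g * c + v * f' * g * d * f' * k, u * d + v * c + v * f' * d * t, ?_⟩
      push_cast
      linear_combination (v * f' * g * d * f' : K) * hq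
  refine ⟨hfitt, hAA, hB, ?_⟩
  let φ : ℤ →+* O ⧸ relFittingIdeal a b := Int.castRingHom _
  have hφ : Function.Surjective φ := by
    intro y
    obtain ⟨z, rfl⟩ := Ideal.Quotient.mk_surjective y
    obtain ⟨u, v, ez⟩ := (hO z).1 z.2
    refine ⟨u, ?_⟩
    have : φ u = Ideal.Quotient.mk (relFittingIdeal a b) (u : O) := by simp [φ]
    rw [this, Ideal.Quotient.eq, hAA]
    refine ⟨0, -v, ?_⟩
    push_cast
    rw [ez]
    push_cast
    ring
  have hker : RingHom.ker φ = Ideal.span {(g : ℤ)} := by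
    ext u
    have : φ u = Ideal.Quotient.mk (relFittingIdeal a b) (u : O) := by simp [φ]
    rw [RingHom.mem_ker, this, Ideal.Quotient.eq_zero_iff_mem, hAA, Ideal.mem_span_singleton]
    constructor
    · rintro ⟨c, d, e⟩
      obtain ⟨h1, -⟩ := hind (u - c * g) (- (d * f' * g)) (by
        push_cast at e ⊢
        linear_combination e)
      exact ⟨c, by linarith⟩
    · rintro ⟨c, rfl⟩
      exact ⟨c, 0, by push_cast; ring⟩
  exact ⟨((RingHom.quotientKerEquivOfSurjective hφ).symm.trans (Ideal.quotEquivOfEq hker)).trans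
    (Int.quotientSpanNatEquivZMod g)⟩
end

section
/- Let R = 𝒪_f be an order in a quadratic number field and I an ideal of R. Then for every n > 2, SLₙ(R) acts transitively on the set Vₙ(I) of generating vectors of I of length n. -/
namespace OrderSL

open Matrix

variable {R : Type*} [CommRing R] {n : ℕ}

/-- Being in the same orbit under right multiplication by the special linear group. -/
def Rel (v w : Fin n → R) : Prop :=
  ∃ σ : Matrix.SpecialLinearGroup (Fin n) R, w = v ᵥ* (σ : Matrix (Fin n) (Fin n) R)

lemma Rel.refl (v : Fin n → R) : Rel v v := ⟨1, by simp⟩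

lemma Rel.trans {u v w : Fin n → R} (h : Rel u v) (h' : Rel v w) : Rel u w := by
  obtain ⟨σ, rfl⟩ := h
  obtain ⟨τ, rfl⟩ := h'
  exact ⟨σ * τ, by simp [Matrix.vecMul_vecMul]⟩

lemma Rel.symm {v w : Fin n → R} (h : Rel v w) : Rel w v := by
  obtain ⟨σ, rfl⟩ := h
  refine ⟨σ⁻¹, ?_⟩
  rw [Matrix.vecMul_vecMul, ← Matrix.SpecialLinearGroup.coe_mul]
  simp

lemma rel_update (v : Fin n → R) (i j : Fin n) (h : i ≠ j) (r : R) :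
    Rel v (Function.update v i (v i + r * v j)) := by
  refine ⟨⟨Matrix.transvection j i r, Matrix.det_transvection_of_ne _ _ h.symm r⟩, ?_⟩
  ext k
  simp only [Matrix.transvection, Matrix.vecMul_add, Matrix.vecMul_one, Pi.add_apply]
  by_cases hk : k = i
  · subst hk
    simp [Matrix.vecMul, dotProduct, Matrix.single_apply, mul_comm]
  · have hk' : ¬ i = k := fun h => hk h.symm
    simp [Matrix.vecMul, dotProduct, Matrix.single_apply, hk, hk']

lemma Rel.span_le {v w : Fin n → R} (h : Rel v w) :
    Ideal.span (Set.range w) ≤ Ideal.span (Set.range v) := by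
  obtain ⟨σ, rfl⟩ := h
  rw [Ideal.span_le]
  rintro _ ⟨j, rfl⟩
  simp only [Matrix.vecMul, dotProduct, SetLike.mem_coe]
  exact Ideal.sum_mem _ fun i _ => Ideal.mul_mem_right _ _ (Ideal.subset_span ⟨i, rfl⟩)

lemma Rel.span_eq {v w : Fin n → R} (h : Rel v w) :
    Ideal.span (Set.range w) = Ideal.span (Set.range v) :=
  le_antisymm h.span_le h.symm.span_le

lemma rel_swap (v : Fin n → R) (i j : Fin n) (h : i ≠ j) :
    Rel v (Function.update (Function.update v i (v j)) j (- v i)) := by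
  have h1 := rel_update v i j h 1
  have h2 := h1.trans (rel_update _ j i h.symm (-1))
  have h3 := h2.trans (rel_update _ i j h 1)
  convert h3 using 1
  ext k
  by_cases hi : k = i
  · subst hi
    simp [h, h.symm]
  · by_cases hj : k = j
    · subst hj
      simp [h, h.symm]
    · simp [hi, hj]

lemma euclid_two (φ : R →+ ℤ) (i k : Fin n) (h : i ≠ k) (N : ℕ) :
    ∀ v : Fin n → R, (φ (v i)).natAbs ≤ N → ∃ v', Rel v v' ∧ (∀ j, j ≠ i → j ≠ k → v' j = v j) ∧
      φ (v' i) = 0 ∧ ∀ ψ : R →+ ℤ, ψ (v i) = 0 → ψ (v k) = 0 → ψ (v' i) = 0 ∧ ψ (v' k) = 0 := by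
  induction N with
  | zero =>
    intro v hv
    exact ⟨v, Rel.refl v, fun _ _ _ => rfl, by omega, fun ψ h1 h2 => ⟨h1, h2⟩⟩
  | succ N ih =>
    intro v hv
    by_cases h0 : φ (v i) = 0
    · exact ⟨v, Rel.refl v, fun _ _ _ => rfl, h0, fun ψ h1 h2 => ⟨h1, h2⟩⟩
    set t : ℤ := φ (v k) / φ (v i) with ht
    have r1 := rel_update v k i h.symm (-(t : R))
    have r2 := r1.trans (rel_swap _ i k h)
    have key : ∀ ψ : R →+ ℤ, ψ (v k + -(t : R) * v i) = ψ (v k) - t * ψ (v i) := by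
      intro ψ
      have : v k + -(t : R) * v i = v k - t • v i := by
        rw [zsmul_eq_mul]; ring
      rw [this, map_sub, map_zsmul, smul_eq_mul]
    obtain ⟨v', a, b, c, d⟩ := ih _ (by
      simp only [Function.update_self, ne_eq, h, not_false_eq_true, Function.update_of_ne]
      rw [key φ]
      have e1 := Int.emod_def (φ (v k)) (φ (v i))
      have e2 := Int.emod_nonneg (φ (v k)) h0
      have e3 := Int.emod_lt_abs (φ (v k)) h0
      have e4 : φ (v k) - t * φ (v i) = φ (v k) % φ (v i) := by rw [e1, ht]; ring
      rw [e4]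
      rw [Int.abs_eq_natAbs] at e3
      omega : (φ ((Function.update (Function.update (Function.update v k (v k + -(t : R) * v i)) i
        ((Function.update v k (v k + -(t : R) * v i)) k)) k
        (-(Function.update v k (v k + -(t : R) * v i)) i)) i)).natAbs ≤ N)
    refine ⟨v', r2.trans a, ?_, c, ?_⟩
    · intro j hj hj'
      rw [b j hj hj']
      simp [hj, hj']
    · intro ψ p1 p2
      apply d
      · simp only [Function.update_self, ne_eq, h, not_false_eq_true, Function.update_of_ne]
        rw [key ψ, p1, p2]; simp
      · simp [h, p1]

lemma euclid_many (φ : R →+ ℤ) (k : Fin n) (S : Finset (Fin n)) : k ∉ S →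
    ∀ v : Fin n → R, ∃ v', Rel v v' ∧ (∀ j, j ∉ S → j ≠ k → v' j = v j) ∧
      (∀ i ∈ S, φ (v' i) = 0) ∧
      ∀ ψ : R →+ ℤ, (∀ i ∈ S, ψ (v i) = 0) → ψ (v k) = 0 →
        (∀ i ∈ S, ψ (v' i) = 0) ∧ ψ (v' k) = 0 := by
  induction S using Finset.induction_on with
  | empty =>
    intro _ v
    exact ⟨v, Rel.refl v, fun _ _ _ => rfl, by simp, fun ψ h1 h2 => ⟨h1, h2⟩⟩
  | insert i S hi ih =>
    intro hk v
    rw [Finset.mem_insert, not_or] at hk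
    obtain ⟨v', a, b, c, d⟩ := ih hk.2 v
    obtain ⟨u, a', b', c', d'⟩ := euclid_two φ i k (Ne.symm hk.1) _ v' le_rfl
    have hne : ∀ j ∈ S, j ≠ i ∧ j ≠ k := fun j hj =>
      ⟨fun e => hi (e ▸ hj), fun e => hk.2 (e ▸ hj)⟩
    refine ⟨u, a.trans a', ?_, ?_, ?_⟩
    · intro j hj hjk
      rw [Finset.mem_insert, not_or] at hj
      rw [b' j hj.1 hjk, b j hj.2 hjk]
    · intro j hj
      rcases Finset.mem_insert.1 hj with rfl | hj
      · exact c'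
      · rw [b' j (hne j hj).1 (hne j hj).2]
        exact c j hj
    · intro ψ p1 p2
      obtain ⟨q1, q2⟩ := d ψ (fun j hj => p1 j (Finset.mem_insert_of_mem hj)) p2
      have q3 : ψ (v' i) = 0 := by
        rw [b i hi (Ne.symm hk.1)]
        exact p1 i (Finset.mem_insert_self _ _)
      obtain ⟨q4, q5⟩ := d' ψ q3 q2
      refine ⟨fun j hj => ?_, q5⟩
      rcases Finset.mem_insert.1 hj with rfl | hj
      · exact q4
      · rw [b' j (hne j hj).1 (hne j hj).2]
        exact q1 j hj

lemma reduce_two (φ ψ : R →+ ℤ) (hinj : ∀ x, φ x = 0 → ψ x = 0 → x = 0)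
    (i₀ i₁ : Fin n) (h : i₀ ≠ i₁) (v : Fin n → R) :
    ∃ v', Rel v v' ∧ ∀ j, j ≠ i₀ → j ≠ i₁ → v' j = 0 := by
  obtain ⟨v₁, a, -, c, -⟩ := euclid_many φ i₀ (Finset.univ.erase i₀) (by simp) v
  obtain ⟨v₂, a', -, c', d'⟩ := euclid_many ψ i₁ ((Finset.univ.erase i₀).erase i₁) (by simp) v₁
  obtain ⟨d1, -⟩ := d' φ (fun i hi => c i (Finset.mem_of_mem_erase hi)) (c i₁ (by simp [h.symm]))
  refine ⟨v₂, a.trans a', fun j h0 h1 => hinj _ (d1 j (by simp [h0, h1])) (c' j (by simp [h0, h1]))⟩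

/-- Finite commutative rings have stable range one. -/
lemma finite_stable {A : Type*} [CommRing A] [Finite A] (a b x y : A) (h : x * a + y * b = 1) :
    ∃ t, IsUnit (a + t * b) := by
  obtain ⟨k, hk, e⟩ : ∃ k, 0 < k ∧ a ^ k * a ^ k = a ^ k := by
    obtain ⟨i, j, hij, e⟩ := Finite.exists_ne_map_eq_of_infinite (fun k : ℕ => a ^ k)
    wlog hlt : i < j generalizing i j
    · exact this j i hij.symm e.symm (by omega)
    obtain ⟨d, rfl⟩ := Nat.exists_eq_add_of_lt hlt
    have h1 : ∀ l, a ^ (i + l * (d + 1)) = a ^ i := by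
      intro l
      induction l with
      | zero => simp
      | succ l ih =>
        rw [show i + (l + 1) * (d + 1) = (i + l * (d + 1)) + (d + 1) by ring, pow_add, ih,
          ← pow_add, ← add_assoc]
        exact e.symm
    refine ⟨(i + 1) * (d + 1), by positivity, ?_⟩
    have h2 : (i + 1) * (d + 1) = i + ((i + 1) * (d + 1) - i) := by
      have : i ≤ (i + 1) * (d + 1) := by nlinarith
      omega
    conv_lhs => rw [← pow_add]
    conv_lhs => rw [show (i + 1) * (d + 1) + (i + 1) * (d + 1) =
      (i + (i + 1) * (d + 1)) + ((i + 1) * (d + 1) - i) by omega]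
    rw [pow_add, h1 (i + 1), ← pow_add, ← h2]
  refine ⟨y * (1 - a ^ k), ?_⟩
  by_contra hu
  obtain ⟨M, hM, hz⟩ := exists_max_ideal_of_mem_nonunits hu
  have hP := hM.isPrime
  have hne : (1 : A) ∉ M := fun h => hM.ne_top ((Ideal.eq_top_iff_one _).2 h)
  have hz' : a + (1 - x * a) * (1 - a ^ k) ∈ M := by
    convert hz using 1
    linear_combination (1 - a ^ k) * (-h)
  have ham : a ∈ M := by
    have h0 : a ^ k * (1 - a ^ k) ∈ M := by
      rw [mul_sub, mul_one, e, sub_self]; exact M.zero_mem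
    rcases hP.mem_or_mem h0 with h1 | h1
    · exact hP.mem_of_pow_mem _ h1
    · have := M.sub_mem hz' (M.mul_mem_left (1 - x * a) h1)
      simpa using this
  have hak : a ^ k ∈ M := M.pow_mem_of_mem ham k hk
  apply hne
  have : (1 : A) = (a + (1 - x * a) * (1 - a ^ k)) - (1 - x * (1 - a ^ k)) * a + a ^ k := by ring
  rw [this]
  exact M.add_mem (M.sub_mem hz' (M.mul_mem_left _ ham)) hak

section three

variable (i₀ i₁ i₂ : Fin n)

/-- A vector supported on three indices. -/
def T (x y z : R) : Fin n → R :=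
  fun i => if i = i₀ then x else if i = i₁ then y else if i = i₂ then z else 0

variable {i₀ i₁ i₂}

lemma T_rel0 (h01 : i₀ ≠ i₁) (h02 : i₀ ≠ i₂) (h12 : i₁ ≠ i₂)
    (x y z r s : R) : Rel (T i₀ i₁ i₂ x y z) (T i₀ i₁ i₂ (x + r * y + s * z) y z) := by
  convert (rel_update _ i₀ i₁ h01 r).trans (rel_update _ i₀ i₂ h02 s) using 1
  ext k
  by_cases k0 : k = i₀
  · subst k0; simp [T, h01.symm, h02.symm, h12.symm]
  · simp [T, k0]

lemma T_rel1 (h01 : i₀ ≠ i₁) (h02 : i₀ ≠ i₂) (h12 : i₁ ≠ i₂)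
    (x y z r s : R) : Rel (T i₀ i₁ i₂ x y z) (T i₀ i₁ i₂ x (y + r * x + s * z) z) := by
  convert (rel_update _ i₁ i₀ h01.symm r).trans (rel_update _ i₁ i₂ h12 s) using 1
  ext k
  by_cases k0 : k = i₁
  · subst k0; simp [T, h01, h01.symm, h02.symm, h12.symm]
  · simp [T, k0]

lemma T_rel2 (h01 : i₀ ≠ i₁) (h02 : i₀ ≠ i₂) (h12 : i₁ ≠ i₂)
    (x y z r s : R) : Rel (T i₀ i₁ i₂ x y z) (T i₀ i₁ i₂ x y (z + r * x + s * y)) := by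
  convert (rel_update _ i₂ i₀ h02.symm r).trans (rel_update _ i₂ i₁ h12.symm s) using 1
  ext k
  by_cases k0 : k = i₂
  · subst k0; simp [T, h01, h01.symm, h02.symm, h12.symm, h02, h12]
  · simp [T, k0]

lemma T_main (h01 : i₀ ≠ i₁) (h02 : i₀ ≠ i₂) (h12 : i₁ ≠ i₂)
    (hfin : ∀ J : Ideal R, J ≠ ⊥ → Finite (R ⧸ J)) (a b c d : R) (hc : c ≠ 0)
    (h : Ideal.span {a, b} = Ideal.span {c, d}) :
    Rel (T i₀ i₁ i₂ a b 0) (T i₀ i₁ i₂ c d 0) := by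
  have ha : a ∈ Ideal.span {c, d} := h ▸ Ideal.subset_span (by simp)
  have hb : b ∈ Ideal.span {c, d} := h ▸ Ideal.subset_span (by simp)
  have hc' : c ∈ Ideal.span {a, b} := h ▸ Ideal.subset_span (by simp)
  have hd : d ∈ Ideal.span {a, b} := h ▸ Ideal.subset_span (by simp)
  rw [Ideal.mem_span_pair] at ha hb hc' hd
  obtain ⟨p1, e1, ha⟩ := ha
  obtain ⟨p2, e2, hb⟩ := hb
  obtain ⟨α, β, hc'⟩ := hc'
  obtain ⟨γ, δ, hd⟩ := hd
  let J : Ideal R := Submodule.comap (LinearMap.mulRight R d) (Ideal.span {c})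
  have hJ : ∀ x, x ∈ J ↔ ∃ q, q * c = x * d := by
    intro x
    simp only [J, Submodule.mem_comap, LinearMap.mulRight_apply, Ideal.mem_span_singleton']
  have hJ0 : J ≠ ⊥ := by
    intro hbot
    have : c ∈ J := (hJ c).2 ⟨d, by ring⟩
    rw [hbot] at this
    exact hc (by simpa using this)
  have := hfin J hJ0
  obtain ⟨t, ht⟩ := finite_stable (Ideal.Quotient.mk J e1) (Ideal.Quotient.mk J e2)
    (Ideal.Quotient.mk J γ) (Ideal.Quotient.mk J δ) (by
      rw [← map_mul, ← map_mul, ← map_add, ← map_one (Ideal.Quotient.mk J), Ideal.Quotient.eq, hJ]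
      refine ⟨- (γ * p1 + δ * p2), ?_⟩
      linear_combination (-γ) * ha - δ * hb - hd)
  obtain ⟨t, rfl⟩ := Ideal.Quotient.mk_surjective t
  obtain ⟨u', hu'⟩ := ht.exists_left_inv
  obtain ⟨u', rfl⟩ := Ideal.Quotient.mk_surjective u'
  rw [← map_mul, ← map_add, ← map_mul, ← map_one (Ideal.Quotient.mk J), Ideal.Quotient.eq, hJ] at hu'
  obtain ⟨q, hq⟩ := hu'
  set u := e1 + t * e2 with hu
  have s1 := T_rel2 h01 h02 h12 a b 0 α β
  rw [show 0 + α * a + β * b = c by rw [← hc']; ring] at s1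
  have s2 := T_rel0 h01 h02 h12 a b c t (-(p1 + t * p2))
  rw [show a + t * b + -(p1 + t * p2) * c = u * d by
    rw [← ha, ← hb]; ring] at s2
  have s3 := T_rel1 h01 h02 h12 (u * d) b c ((1 - e2) * u') (-p2 - (1 - e2) * q)
  rw [show b + (1 - e2) * u' * (u * d) + (-p2 - (1 - e2) * q) * c = d by
    linear_combination (-1) * hb - (1 - e2) * hq] at s3
  have s4 := T_rel0 h01 h02 h12 (u * d) d c (-u) 1
  rw [show u * d + -u * d + 1 * c = c by ring] at s4
  have s5 := T_rel2 h01 h02 h12 c d c (-1) 0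
  rw [show c + -1 * c + 0 * d = 0 by ring] at s5
  exact (((s1.trans s2).trans s3).trans s4).trans s5

end three

theorem general [IsDomain R] (e : R ≃ₗ[ℤ] ℤ × ℤ) (hn : 2 < n) (v w : Fin n → R)
    (h : Ideal.span (Set.range v) = Ideal.span (Set.range w)) : Rel v w := by
  have : Module.Free ℤ R := Module.Free.of_equiv e.symm
  have : Module.Finite ℤ R := Module.Finite.equiv e.symm
  have hfin : ∀ J : Ideal R, J ≠ ⊥ → Finite (R ⧸ J) := fun J hJ =>
    Ideal.finiteQuotientOfFreeOfNeBot J hJ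
  let i₀ : Fin n := ⟨0, by omega⟩
  let i₁ : Fin n := ⟨1, by omega⟩
  let i₂ : Fin n := ⟨2, by omega⟩
  have h01 : i₀ ≠ i₁ := by simp [i₀, i₁]
  have h02 : i₀ ≠ i₂ := by simp [i₀, i₂]
  have h12 : i₁ ≠ i₂ := by simp [i₁, i₂]
  have red : ∀ v : Fin n → R, ∃ a b, Rel v (T i₀ i₁ i₂ a b 0) := by
    intro v
    obtain ⟨v', r, hv'⟩ := reduce_two
      ((AddMonoidHom.fst ℤ ℤ).comp (e : R →ₗ[ℤ] ℤ × ℤ).toAddMonoidHom)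
      ((AddMonoidHom.snd ℤ ℤ).comp (e : R →ₗ[ℤ] ℤ × ℤ).toAddMonoidHom)
      (fun x h1 h2 => by
        have : e x = 0 := Prod.ext h1 h2
        simpa using this) i₀ i₁ h01 v
    refine ⟨v' i₀, v' i₁, ?_⟩
    convert r using 1
    ext k
    unfold T
    split_ifs with k0 k1 k2
    · rw [k0]
    · rw [k1]
    · exact (hv' k k0 k1).symm
    · exact (hv' k k0 k1).symm
  have hspan : ∀ a b : R, Ideal.span (Set.range (T i₀ i₁ i₂ a b 0)) = Ideal.span {a, b} := by
    intro a b
    apply le_antisymm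
    · rw [Ideal.span_le]
      rintro _ ⟨k, rfl⟩
      unfold T
      split_ifs
      · exact Ideal.subset_span (by simp)
      · exact Ideal.subset_span (by simp)
      · exact Ideal.zero_mem _
      · exact Ideal.zero_mem _
    · rw [Ideal.span_le]
      rintro x hx
      rcases hx with rfl | hx
      · exact Ideal.subset_span ⟨i₀, by simp [T]⟩
      · rw [Set.mem_singleton_iff] at hx
        subst hx
        exact Ideal.subset_span ⟨i₁, by simp [T, h01.symm]⟩
  have fin : ∀ a b c d : R, Rel v (T i₀ i₁ i₂ a b 0) → Rel w (T i₀ i₁ i₂ c d 0) → c ≠ 0 →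
      Rel v w := by
    intro a b c d hv hw hc
    refine (hv.trans (T_main h01 h02 h12 hfin a b c d hc ?_)).trans hw.symm
    rw [← hspan, ← hspan, hv.span_eq, hw.span_eq, h]
  obtain ⟨a, b, hv⟩ := red v
  obtain ⟨c, d, hw⟩ := red w
  by_cases hc : c = 0
  · by_cases hd : d = 0
    · subst hc hd
      have h0 : Ideal.span {a, b} = Ideal.span {(0 : R), 0} := by
        rw [← hspan, ← hspan, hv.span_eq, hw.span_eq, h]
      simp only [Set.pair_eq_singleton, Ideal.span_singleton_zero, Ideal.span_eq_bot] at h0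
      have ha := h0 a (by simp)
      have hb := h0 b (by simp)
      subst ha hb
      exact hv.trans hw.symm
    · refine fin a b d (-c) hv ?_ hd
      have s1 := T_rel0 h01 h02 h12 c d 0 1 0
      have s2 := T_rel1 h01 h02 h12 (c + 1 * d + 0 * 0) d 0 (-1) 0
      have s3 := T_rel0 h01 h02 h12 (c + 1 * d + 0 * 0)
        (d + (-1) * (c + 1 * d + 0 * 0) + 0 * 0) 0 1 0
      convert ((hw.trans s1).trans s2).trans s3 using 2 <;> ring
  · exact fin a b c d hv hw hc

end OrderSL


/-- Let `O = 𝒪_f = ℤ + ℤfω` be an order in a quadratic number field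
`K = ℚ(√m)` and `I` an ideal of `O`.  For every `n > 2`, `SLₙ(O)` acts transitively on
the set `Vₙ(I)` of generating vectors of `I` of length `n`. -/
theorem order_sl_transitive (m : ℤ) (hm : Squarefree m) (hm1 : m ≠ 1)
    (K : Type*) [Field K] [Algebra ℚ K] (sqm : K) (hsqm : sqm ^ 2 = (m : K))
    (hbasis : ∀ x : K, ∃! c : ℚ × ℚ,
      x = algebraMap ℚ K c.1 + algebraMap ℚ K c.2 * sqm)
    (ω : K) (hω : ω = if m % 4 = 1 then (1 + sqm) / 2 else sqm)
    (f : ℕ) (hf : 0 < f)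
    (O : Subring K) (hO : ∀ x : K, x ∈ O ↔ ∃ a b : ℤ, x = a + b * ((f : K) * ω))
    (I : Ideal O) (n : ℕ) (hn : 2 < n)
    (v w : Fin n → O)
    (hv : Ideal.span (Set.range v) = I) (hw : Ideal.span (Set.range w) = I) :
    ∃ σ : Matrix.SpecialLinearGroup (Fin n) O,
      ∀ j, w j = ∑ i, (σ : Matrix (Fin n) (Fin n) O) i j * v i := by
  have hK : CharZero K := algebraRat.charZero K
  have hlin : ∀ a b : ℤ, (a : K) + b * ((f : K) * ω) = 0 → a = 0 ∧ b = 0 := by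
    intro a b hab
    have huniq : ∀ p q : ℚ, (p : K) + (q : K) * sqm = 0 → p = 0 ∧ q = 0 := by
      intro p q hpq
      have h1 := (hbasis 0).unique (y₁ := (p, q)) (y₂ := (0, 0))
        (by simpa using hpq.symm) (by simp)
      exact ⟨congrArg Prod.fst h1, congrArg Prod.snd h1⟩
    have hf' : (f : ℚ) ≠ 0 := by exact_mod_cast hf.ne'
    split_ifs at hω
    · obtain ⟨h1, h2⟩ := huniq (a + b * f / 2) (b * f / 2) (by
        push_cast
        rw [← hab, hω]; ring)
      have hb : (b : ℚ) = 0 := by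
        have : (b : ℚ) * f = 0 := by linarith
        exact (mul_eq_zero.1 this).resolve_right hf'
      rw [hb] at h1
      exact ⟨by exact_mod_cast (by simpa using h1 : (a : ℚ) = 0), by exact_mod_cast hb⟩
    · obtain ⟨h1, h2⟩ := huniq a (b * f) (by
        push_cast
        rw [← hab, hω]; ring)
      exact ⟨by exact_mod_cast h1, by exact_mod_cast (mul_eq_zero.1 h2).resolve_right hf'⟩
  have hg : (f : K) * ω ∈ O := (hO _).2 ⟨0, 1, by simp⟩
  let F : ℤ × ℤ →ₗ[ℤ] O :=
    (LinearMap.toSpanSingleton ℤ O 1).coprod (LinearMap.toSpanSingleton ℤ O ⟨_, hg⟩)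
  have hF : ∀ c, ((F c : O) : K) = c.1 + c.2 * ((f : K) * ω) := by
    intro c
    simp [F]
  have hbij : Function.Bijective F := by
    constructor
    · rw [injective_iff_map_eq_zero]
      intro c hc
      have h1 := hF c
      rw [hc] at h1
      obtain ⟨h2, h3⟩ := hlin c.1 c.2 (by rw [← h1]; simp)
      exact Prod.ext h2 h3
    · rintro ⟨x, hx⟩
      obtain ⟨a, b, hab⟩ := (hO x).1 hx
      exact ⟨(a, b), Subtype.ext ((hF _).trans hab.symm)⟩
  obtain ⟨σ, hσ⟩ := OrderSL.general (LinearEquiv.ofBijective F hbij).symm hn v w (hv.trans hw.symm)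
  refine ⟨σ, fun j => ?_⟩
  rw [hσ]
  simp only [Matrix.vecMul, dotProduct]
  exact Finset.sum_congr rfl fun i _ => mul_comm _ _
end

section
/- Let S = R[x,y] be the polynomial ring in two variables over a commutative ring R and I = Sx + Sy. Then Fitt₁(I) = I, and the determinant map induces a bijection V₂(I)/SL₂(S) ≅ R^×; in particular the SL₂(S)-orbits of generating pairs of I are in natural bijection with the units of R. -/
open MvPolynomial in
lemma pf_mem {R : Type*} [CommRing R] (p : MvPolynomial (Fin 2) R) :
    p ∈ Ideal.span {(X 0 : MvPolynomial (Fin 2) R), X 1} ↔ constantCoeff p = 0 := by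
  constructor
  · intro h
    obtain ⟨a, b, rfl⟩ := Ideal.mem_span_pair.1 h
    simp
  · intro h
    have key : ∀ q : MvPolynomial (Fin 2) R,
        q - C (constantCoeff q) ∈ Ideal.span {(X 0 : MvPolynomial (Fin 2) R), X 1} := by
      intro q
      induction q using MvPolynomial.induction_on with
      | C a => simp
      | add p q hp hq =>
        have := Ideal.add_mem _ hp hq
        rw [map_add, map_add]
        convert this using 1
        ring
      | mul_X p i _ =>
        simp only [map_mul, constantCoeff_X, mul_zero, map_zero, sub_zero]
        apply Ideal.mul_mem_left
        apply Ideal.subset_span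
        fin_cases i <;> simp
    simpa [h] using key p

open MvPolynomial in
lemma pf_syz {R : Type*} [CommRing R] (r s : MvPolynomial (Fin 2) R)
    (h : r * X 0 + s * X 1 = 0) : constantCoeff r = 0 ∧ constantCoeff s = 0 := by
  constructor
  · have := congrArg (coeff (Finsupp.single 0 1)) h
    simpa [coeff_mul_X', constantCoeff_eq, Finsupp.single_apply] using this
  · have := congrArg (coeff (Finsupp.single 1 1)) h
    simpa [coeff_mul_X', constantCoeff_eq, Finsupp.single_apply] using this

open MvPolynomial in
lemma pf_syz' {R : Type*} [CommRing R] (a c a' c' : MvPolynomial (Fin 2) R)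
    (h : a * X 0 + c * X 1 = a' * X 0 + c' * X 1) :
    constantCoeff a = constantCoeff a' ∧ constantCoeff c = constantCoeff c' := by
  have := pf_syz (a - a') (c - c') (by linear_combination h)
  simpa [sub_eq_zero] using this

open MvPolynomial in
/-- the determinant of a generating pair is a unit mod `I` -/
lemma pf_unit {R : Type*} [CommRing R] (a b c d : MvPolynomial (Fin 2) R)
    (h : Ideal.span {a * X 0 + c * X 1, b * X 0 + d * X 1} =
      Ideal.span {(X 0 : MvPolynomial (Fin 2) R), X 1}) :
    IsUnit (constantCoeff (a * d - b * c)) := by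
  have h0 : (X 0 : MvPolynomial (Fin 2) R) ∈
      Ideal.span {a * X 0 + c * X 1, b * X 0 + d * X 1} := by
    rw [h]; exact Ideal.subset_span (by simp)
  have h1 : (X 1 : MvPolynomial (Fin 2) R) ∈
      Ideal.span {a * X 0 + c * X 1, b * X 0 + d * X 1} := by
    rw [h]; exact Ideal.subset_span (by simp)
  obtain ⟨p, q, e0⟩ := Ideal.mem_span_pair.1 h0
  obtain ⟨r, s, e1⟩ := Ideal.mem_span_pair.1 h1
  obtain ⟨k1, k2⟩ := pf_syz' (p * a + q * b) (p * c + q * d) 1 0 (by linear_combination e0)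
  obtain ⟨k3, k4⟩ := pf_syz' (r * a + s * b) (r * c + s * d) 0 1 (by linear_combination e1)
  simp only [map_add, map_mul, map_one, map_zero] at k1 k2 k3 k4
  refine IsUnit.of_mul_eq_one (constantCoeff (p * s - q * r)) ?_
  simp only [map_sub, map_mul]
  linear_combination (constantCoeff r * constantCoeff c + constantCoeff s * constantCoeff d) * k1
    - (constantCoeff r * constantCoeff a + constantCoeff s * constantCoeff b) * k2 + k4

open MvPolynomial in
/-- the matrix can be changed so that its determinant is a constant -/
lemma pf_adjust {R : Type*} [CommRing R] (a b c d : MvPolynomial (Fin 2) R) (u : R)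
    (h : Ideal.span {a * X 0 + c * X 1, b * X 0 + d * X 1} =
      Ideal.span {(X 0 : MvPolynomial (Fin 2) R), X 1})
    (hu : constantCoeff (a * d - b * c) = u) :
    ∃ a' b' c' d' : MvPolynomial (Fin 2) R,
      a' * X 0 + c' * X 1 = a * X 0 + c * X 1 ∧ b' * X 0 + d' * X 1 = b * X 0 + d * X 1 ∧
      a' * d' - b' * c' = C u := by
  have hm : C u - (a * d - b * c) ∈ Ideal.span {a * X 0 + c * X 1, b * X 0 + d * X 1} := by
    rw [h, pf_mem, map_sub, constantCoeff_C, hu, sub_self]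
  obtain ⟨t, s, e⟩ := Ideal.mem_span_pair.1 hm
  refine ⟨a + s * X 1, b - t * X 1, c - s * X 0, d + t * X 0, by ring, by ring, ?_⟩
  linear_combination e

/-- Let `S = R[x,y]` and `I = Sx + Sy`.  Then `Fitt₁(I) = I`, and the
determinant map induces a bijection `V₂(I)/SL₂(S) ≃ Rˣ`: every generating pair of `I` is
the image of `(x, y)` under a matrix; two generating pairs are `SL₂(S)`-equivalent iff
the determinants of their transition matrices agree mod `I`; and every unit of `R` is
attained as such a determinant mod `I`. -/
theorem polynomial_two_variables_fitting {R : Type*} [CommRing R] :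
    relFittingIdeal (MvPolynomial.X 0 : MvPolynomial (Fin 2) R) (MvPolynomial.X 1) =
      Ideal.span {(MvPolynomial.X 0 : MvPolynomial (Fin 2) R), MvPolynomial.X 1} ∧
    (∀ w : Fin 2 → MvPolynomial (Fin 2) R,
      Ideal.span {w 0, w 1} =
        Ideal.span {(MvPolynomial.X 0 : MvPolynomial (Fin 2) R), MvPolynomial.X 1} →
      ∃ A : Matrix (Fin 2) (Fin 2) (MvPolynomial (Fin 2) R),
        ∀ j, w j = ∑ i, A i j * ![MvPolynomial.X 0, MvPolynomial.X 1] i) ∧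
    (∀ (w w' : Fin 2 → MvPolynomial (Fin 2) R)
        (A A' : Matrix (Fin 2) (Fin 2) (MvPolynomial (Fin 2) R)),
      Ideal.span {w 0, w 1} =
        Ideal.span {(MvPolynomial.X 0 : MvPolynomial (Fin 2) R), MvPolynomial.X 1} →
      Ideal.span {w' 0, w' 1} =
        Ideal.span {(MvPolynomial.X 0 : MvPolynomial (Fin 2) R), MvPolynomial.X 1} →
      (∀ j, w j = ∑ i, A i j * ![MvPolynomial.X 0, MvPolynomial.X 1] i) →
      (∀ j, w' j = ∑ i, A' i j * ![MvPolynomial.X 0, MvPolynomial.X 1] i) →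
      ((A.det - A'.det ∈
          Ideal.span {(MvPolynomial.X 0 : MvPolynomial (Fin 2) R), MvPolynomial.X 1}) ↔
        ∃ σ : Matrix.SpecialLinearGroup (Fin 2) (MvPolynomial (Fin 2) R),
          ∀ j, w' j = ∑ i, (σ : Matrix (Fin 2) (Fin 2) (MvPolynomial (Fin 2) R)) i j * w i)) ∧
    (∀ u : Rˣ, ∃ (w : Fin 2 → MvPolynomial (Fin 2) R)
        (A : Matrix (Fin 2) (Fin 2) (MvPolynomial (Fin 2) R)),
      Ideal.span {w 0, w 1} =
        Ideal.span {(MvPolynomial.X 0 : MvPolynomial (Fin 2) R), MvPolynomial.X 1} ∧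
      (∀ j, w j = ∑ i, A i j * ![MvPolynomial.X 0, MvPolynomial.X 1] i) ∧
      A.det - MvPolynomial.C (u : R) ∈
        Ideal.span {(MvPolynomial.X 0 : MvPolynomial (Fin 2) R), MvPolynomial.X 1}) := by
  classical
  refine ⟨?_, ?_, ?_, ?_⟩
  · apply le_antisymm
    · refine Ideal.span_le.2 ?_
      rintro r (⟨s, hs⟩ | ⟨s, hs⟩)
      · exact (pf_mem r).2 (pf_syz _ _ hs).1
      · exact (pf_mem r).2 (pf_syz _ _ hs).2
    · refine Ideal.span_le.2 ?_
      rintro r (rfl | rfl)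
      · exact Ideal.subset_span (Or.inr ⟨-MvPolynomial.X 1, by ring⟩)
      · exact Ideal.subset_span (Or.inl ⟨-MvPolynomial.X 0, by ring⟩)
  · intro w hw
    have h0 : ∀ j, w j ∈ Ideal.span {(MvPolynomial.X 0 : MvPolynomial (Fin 2) R), MvPolynomial.X 1} := by
      intro j
      rw [← hw]
      apply Ideal.subset_span
      fin_cases j <;> simp
    have h1 : ∀ j, ∃ a b, a * MvPolynomial.X 0 + b * MvPolynomial.X 1 = w j := fun j => Ideal.mem_span_pair.1 (h0 j)
    choose a b hab using h1
    refine ⟨Matrix.of ![a, b], fun j => ?_⟩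
    simp [Fin.sum_univ_two, hab]
  · intro w w' A A' hw hw' hA hA'
    simp only [Fin.sum_univ_two, Matrix.cons_val_zero, Matrix.cons_val_one] at hA hA' ⊢
    rw [hA 0, hA 1] at hw
    rw [hA' 0, hA' 1] at hw'
    rw [Matrix.det_fin_two, Matrix.det_fin_two, pf_mem, map_sub, sub_eq_zero]
    constructor
    · intro hdet
      obtain ⟨u, hu⟩ := pf_unit (A 0 0) (A 0 1) (A 1 0) (A 1 1) hw
      obtain ⟨a, b, c, d, e0, e1, e2⟩ := pf_adjust (A 0 0) (A 0 1) (A 1 0) (A 1 1) (u : R) hw hu.symm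
      obtain ⟨a', b', c', d', e0', e1', e2'⟩ :=
        pf_adjust (A' 0 0) (A' 0 1) (A' 1 0) (A' 1 1) (u : R) hw' (hdet.symm.trans hu.symm)
      have huv : (MvPolynomial.C (u : R) : MvPolynomial (Fin 2) R) * MvPolynomial.C ((u⁻¹ : Rˣ) : R) = 1 := by
        rw [← MvPolynomial.C_mul, Units.mul_inv, MvPolynomial.C_1]
      generalize (MvPolynomial.C (u : R) : MvPolynomial (Fin 2) R) = U at *
      generalize (MvPolynomial.C ((u⁻¹ : Rˣ) : R) : MvPolynomial (Fin 2) R) = V at *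
      refine ⟨⟨!![V * (d * a' - b * c'), V * (d * b' - b * d');
        V * (a * c' - c * a'), V * (a * d' - c * b')], ?_⟩, ?_⟩
      · rw [Matrix.det_fin_two_of]
        have : V * (d * a' - b * c') * (V * (a * d' - c * b')) -
          V * (d * b' - b * d') * (V * (a * c' - c * a')) =
            V ^ 2 * ((a * d - b * c) * (a' * d' - b' * c')) := by ring
        rw [this, e2, e2']
        linear_combination (U * V + 1) * huv
      · have k0 : w 0 = a * MvPolynomial.X 0 + c * MvPolynomial.X 1 := by rw [hA 0, e0]
        have k1 : w 1 = b * MvPolynomial.X 0 + d * MvPolynomial.X 1 := by rw [hA 1, e1]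
        have k0' : w' 0 = a' * MvPolynomial.X 0 + c' * MvPolynomial.X 1 := by rw [hA' 0, e0']
        have k1' : w' 1 = b' * MvPolynomial.X 0 + d' * MvPolynomial.X 1 := by rw [hA' 1, e1']
        have hV : V * (a * d - b * c) = 1 := by rw [e2]; linear_combination huv
        intro j
        fin_cases j
        · simp [k0, k1, k0']
          linear_combination -(a' * MvPolynomial.X 0 + c' * MvPolynomial.X 1) * hV
        · simp [k0, k1, k1']
          linear_combination -(b' * MvPolynomial.X 0 + d' * MvPolynomial.X 1) * hV
    · rintro ⟨σ, hσ⟩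
      have hs := σ.det_coe
      rw [Matrix.det_fin_two] at hs
      have q0 := hσ 0
      have q1 := hσ 1
      rw [hA' 0, hA 0, hA 1] at q0
      rw [hA' 1, hA 0, hA 1] at q1
      generalize (σ : Matrix (Fin 2) (Fin 2) (MvPolynomial (Fin 2) R)) = s at *
      obtain ⟨l1, l2⟩ := pf_syz' _ _ (s 0 0 * A 0 0 + s 1 0 * A 0 1)
        (s 0 0 * A 1 0 + s 1 0 * A 1 1) (q0.trans (by ring))
      obtain ⟨l3, l4⟩ := pf_syz' _ _ (s 0 1 * A 0 0 + s 1 1 * A 0 1)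
        (s 0 1 * A 1 0 + s 1 1 * A 1 1) (q1.trans (by ring))
      rw [map_sub (MvPolynomial.constantCoeff) (A' 0 0 * A' 1 1), map_mul, map_mul, l1, l2, l3, l4,
        ← map_mul, ← map_mul, ← map_sub]
      congr 1
      linear_combination -(A 0 0 * A 1 1 - A 0 1 * A 1 0) * hs
  · intro u
    refine ⟨![MvPolynomial.X 0, MvPolynomial.C (u : R) * MvPolynomial.X 1], !![1, 0; 0, MvPolynomial.C (u : R)], ?_, ?_, ?_⟩
    · have huv : (MvPolynomial.C ((u⁻¹ : Rˣ) : R) : MvPolynomial (Fin 2) R) * MvPolynomial.C (u : R) = 1 := by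
        rw [← MvPolynomial.C_mul, Units.inv_mul, MvPolynomial.C_1]
      simp only [Matrix.cons_val_zero, Matrix.cons_val_one]
      apply le_antisymm
      · refine Ideal.span_le.2 ?_
        rintro r (rfl | rfl)
        · exact Ideal.subset_span (by simp)
        · exact Ideal.mul_mem_left _ _ (Ideal.subset_span (by simp))
      · refine Ideal.span_le.2 ?_
        rintro r (rfl | rfl)
        · exact Ideal.subset_span (by simp)
        · refine Ideal.mem_span_pair.2 ⟨0, MvPolynomial.C ((u⁻¹ : Rˣ) : R), ?_⟩
          linear_combination MvPolynomial.X 1 * huv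
    · intro j
      fin_cases j <;> simp [Fin.sum_univ_two]
    · rw [Matrix.det_fin_two_of, pf_mem]
      simp
end
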